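/- Quadratic functions bounded from below (Lemma 4.1, first part): Let H be a Hilbert space over 𝕜 (𝕜 = ℝ or ℂ), P a bounded self-adjoint operator on H, w ∈ H, and define V_{P,w} : H → ℝ by V_{P,w}(x) := ⟨Px,x⟩ + 2Re⟨w,x⟩. Then V_{P,w} is bounded from below if and only if P is non-negative (⟨Px,x⟩ ≥ 0 for all x ∈ H) and w ∈ ran P^{1/2}. -/

import Mathlib

open scoped InnerProductSpace
open RCLike ContinuousLinearMap

/-- `w` lies in the range of `P^{1/2}`, the (unique) non-negative self-adjoint square
root of the non-negative self-adjoint operator `P`, expressed via the existence of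
such a square root. -/
def MemRanSqrt {𝕜 H : Type*} [RCLike 𝕜]
    [NormedAddCommGroup H] [InnerProductSpace 𝕜 H] [CompleteSpace H]
    (P : H →L[𝕜] H) (w : H) : Prop :=
  ∃ R : H →L[𝕜] H, IsSelfAdjoint R ∧ (∀ x : H, 0 ≤ re ⟪R x, x⟫_𝕜) ∧
    R.comp R = P ∧ w ∈ Set.range R

lemma aux_sqrt_one_sub {𝕜 H : Type*} [RCLike 𝕜]
    [NormedAddCommGroup H] [InnerProductSpace 𝕜 H] [CompleteSpace H]
    (A : H →L[𝕜] H) (hA : IsSelfAdjoint A) (hn : ‖A‖ ≤ 1) :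
    ∃ Y : H →L[𝕜] H, IsSelfAdjoint Y ∧ ‖Y‖ ≤ 1 ∧ (1 - Y) * (1 - Y) = 1 - A := by
  let c : 𝕜 := ((1 / 2 : ℝ) : 𝕜)
  have hc : ‖c‖ = 1 / 2 := by
    simp only [c]
    rw [RCLike.norm_ofReal]; norm_num
  have hc2 : c + c = 1 := by
    simp only [c]
    rw [← RCLike.ofReal_add]; norm_num
  obtain ⟨Y, hY0, hY⟩ : ∃ Y : ℕ → (H →L[𝕜] H), Y 0 = 0 ∧ ∀ n, Y (n + 1) = c • (A + Y n * Y n) :=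
    ⟨fun n => Nat.rec 0 (fun _ y => c • (A + y * y)) n, rfl, fun n => rfl⟩
  obtain ⟨y, hy0, hy⟩ : ∃ y : ℕ → ℝ, y 0 = 0 ∧ ∀ n, y (n + 1) = (1 + y n * y n) / 2 :=
    ⟨fun n => Nat.rec 0 (fun _ y => (1 + y * y) / 2) n, rfl, fun n => rfl⟩
  have hy01 : ∀ n, 0 ≤ y n ∧ y n ≤ 1 := by
    intro n
    induction n with
    | zero => simp [hy0]
    | succ k ih => rw [hy]; constructor <;> nlinarith [ih.1, ih.2]
  have hYn : ∀ n, ‖Y n‖ ≤ y n := by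
    intro n
    induction n with
    | zero => simp [hy0, hY0]
    | succ k ih =>
      rw [hY, hy, norm_smul, hc]
      have h1 := norm_add_le A (Y k * Y k)
      have h2 := norm_mul_le (Y k) (Y k)
      have h3 : ‖Y k‖ * ‖Y k‖ ≤ y k * y k := by gcongr; exact (hy01 k).1
      linarith
  have hd : ∀ n, ‖Y (n + 1) - Y n‖ ≤ y (n + 1) - y n := by
    intro n
    induction n with
    | zero =>
      rw [hY, hy, hY0, hy0, mul_zero, mul_zero, add_zero, add_zero, sub_zero, sub_zero,
        norm_smul, hc]
      linarith
    | succ k ih =>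
      have e : Y (k + 1 + 1) - Y (k + 1) =
          c • (Y (k+1) * (Y (k + 1) - Y k) + (Y (k + 1) - Y k) * Y k) := by
        have h1 : Y (k + 1 + 1) - Y (k + 1) =
            c • (A + Y (k + 1) * Y (k + 1)) - c • (A + Y k * Y k) := by
          rw [← hY, ← hY]
        rw [h1, ← smul_sub]; congr 1; noncomm_ring
      have e2 : y (k + 1 + 1) - y (k + 1) =
          1 / 2 * (y (k+1) * (y (k + 1) - y k) + (y (k + 1) - y k) * y k) := by
        have h1 := hy (k + 1)
        have h2 := hy k
        linarith
      rw [e, e2, norm_smul, hc]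
      have h0 := (hy01 (k+1)).1
      have h0' : 0 ≤ y (k+1) - y k := (norm_nonneg _).trans ih
      gcongr
      refine (norm_add_le _ _).trans (add_le_add ?_ ?_)
      · refine (norm_mul_le _ _).trans ?_
        gcongr
        exact hYn _
      · refine (norm_mul_le _ _).trans ?_
        gcongr
        exact hYn _
  have hsum : Summable (fun n => y (n + 1) - y n) := by
    refine summable_of_sum_range_le (c := 1) (fun n => (norm_nonneg _).trans (hd n)) ?_
    intro n
    rw [Finset.sum_range_sub]
    have := (hy01 n).2
    simpa [hy0] using this
  have hcau : CauchySeq Y := by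
    refine cauchySeq_of_dist_le_of_summable _ (fun n => ?_) hsum
    rw [dist_comm, dist_eq_norm]
    exact hd n
  obtain ⟨Z, hZ⟩ := cauchySeq_tendsto_of_complete hcau
  have hsa : ∀ n, IsSelfAdjoint (Y n) := by
    intro n
    induction n with
    | zero => rw [hY0]; exact IsSelfAdjoint.zero _
    | succ k ih =>
      rw [hY]
      refine IsSelfAdjoint.smul ?_ (hA.add ?_)
      · simp [c, IsSelfAdjoint]
      · rw [IsSelfAdjoint, star_mul, ih.star_eq]
  refine ⟨Z, ?_, ?_, ?_⟩
  · have h1 : Filter.Tendsto (fun n => star (Y n)) Filter.atTop (nhds (star Z)) :=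
      (continuous_star.tendsto Z).comp hZ
    have h2 : (fun n => star (Y n)) = Y := funext fun n => (hsa n)
    rw [h2] at h1
    exact tendsto_nhds_unique h1 hZ
  · exact le_of_tendsto hZ.norm (Filter.Eventually.of_forall fun n => (hYn n).trans (hy01 n).2)
  · have h1 : Filter.Tendsto (fun n => Y (n + 1)) Filter.atTop (nhds (c • (A + Z * Z))) := by
      simp only [hY]
      exact (tendsto_const_nhds.add (hZ.mul hZ)).const_smul c
    have h2 := tendsto_nhds_unique h1 (hZ.comp (Filter.tendsto_add_atTop_nat 1))
    have h3 : A + Z * Z = Z + Z := by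
      calc A + Z * Z = c • (A + Z * Z) + c • (A + Z * Z) := by
            rw [← add_smul, hc2, one_smul]
        _ = Z + Z := by rw [h2]
    have h4 : A = Z + Z - Z * Z := by rw [← h3]; abel
    rw [h4]; noncomm_ring

lemma aux_sqrt {𝕜 H : Type*} [RCLike 𝕜]
    [NormedAddCommGroup H] [InnerProductSpace 𝕜 H] [CompleteSpace H]
    (P : H →L[𝕜] H) (hP : IsSelfAdjoint P) (hpos : ∀ x : H, 0 ≤ re ⟪P x, x⟫_𝕜) :
    ∃ R : H →L[𝕜] H, IsSelfAdjoint R ∧ (∀ x : H, 0 ≤ re ⟪R x, x⟫_𝕜) ∧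
    R.comp R = P := by
  have hsym : ∀ x y, ⟪P x, y⟫_𝕜 = ⟪x, P y⟫_𝕜 := fun x y => hP.isSymmetric x y
  set s : ℝ := ‖P‖ + 1 with hs
  have hs0 : 0 < s := by positivity
  let d : 𝕜 := ((s⁻¹ : ℝ) : 𝕜)
  have key : ∀ x, s⁻¹ * ‖P x‖ ^ 2 ≤ re ⟪P x, x⟫_𝕜 := by
    intro x
    have h := hpos (x - d • P x)
    have e : re ⟪P (x - d • P x), x - d • P x⟫_𝕜 =
      re ⟪P x, x⟫_𝕜 - 2 * s⁻¹ * ‖P x‖ ^ 2 + s⁻¹ ^ 2 * re ⟪P (P x), P x⟫_𝕜 := by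
      simp only [map_sub, map_smul, inner_sub_left, inner_sub_right, inner_smul_left,
        inner_smul_right, d, RCLike.conj_ofReal, RCLike.re_ofReal_mul, hsym (P x) x,
        ← inner_self_eq_norm_sq (𝕜 := 𝕜)]
      ring
    rw [e] at h
    have h2 : re ⟪P (P x), P x⟫_𝕜 ≤ s * ‖P x‖ ^ 2 := by
      refine (re_inner_le_norm _ _).trans ?_
      have := P.le_opNorm (P x)
      nlinarith [norm_nonneg (P x)]
    have h3 : s⁻¹ ^ 2 * re ⟪P (P x), P x⟫_𝕜 ≤ s⁻¹ * ‖P x‖ ^ 2 := by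
      calc _ ≤ s⁻¹ ^ 2 * (s * ‖P x‖ ^ 2) := by gcongr
        _ = _ := by field_simp
    linarith
  have hdsa : IsSelfAdjoint d := by simp [d, IsSelfAdjoint]
  have hA : IsSelfAdjoint (1 - d • P) := (IsSelfAdjoint.one _).sub (hdsa.smul hP)
  have hAn : ‖1 - d • P‖ ≤ 1 := by
    refine ContinuousLinearMap.opNorm_le_bound _ zero_le_one fun x => ?_
    rw [one_mul]
    refine le_of_sq_le_sq ?_ (norm_nonneg _)
    have e : ‖(1 - d • P) x‖ ^ 2 =
        ‖x‖ ^ 2 - 2 * s⁻¹ * re ⟪P x, x⟫_𝕜 + s⁻¹ ^ 2 * ‖P x‖ ^ 2 := by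
      simp only [← inner_self_eq_norm_sq (𝕜 := 𝕜), ContinuousLinearMap.sub_apply,
        ContinuousLinearMap.one_apply, ContinuousLinearMap.smul_apply, map_sub,
        inner_sub_left, inner_sub_right, inner_smul_left,
        inner_smul_right, d, RCLike.conj_ofReal, RCLike.re_ofReal_mul, hsym x x]
      ring
    rw [e]
    have := mul_le_mul_of_nonneg_left (key x) (inv_nonneg.2 hs0.le)
    have := mul_nonneg (inv_nonneg.2 hs0.le) (hpos x)
    nlinarith
  obtain ⟨Y, hY1, hY2, hY3⟩ := aux_sqrt_one_sub _ hA hAn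
  let q : 𝕜 := ((√s : ℝ) : 𝕜)
  have hq : q * q * d = 1 := by
    simp only [q, d]
    rw [← RCLike.ofReal_mul, ← RCLike.ofReal_mul, Real.mul_self_sqrt hs0.le,
      mul_inv_cancel₀ hs0.ne', RCLike.ofReal_one]
  refine ⟨q • (1 - Y), ?_, ?_, ?_⟩
  · exact IsSelfAdjoint.smul (by simp [q, IsSelfAdjoint]) ((IsSelfAdjoint.one _).sub hY1)
  · intro x
    simp only [ContinuousLinearMap.sub_apply,
        ContinuousLinearMap.one_apply, ContinuousLinearMap.smul_apply, map_sub,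
        inner_sub_left, inner_smul_left, q, RCLike.conj_ofReal, RCLike.re_ofReal_mul]
    refine mul_nonneg (Real.sqrt_nonneg _) ?_
    have h1 := re_inner_le_norm (𝕜 := 𝕜) (Y x) x
    have h2 := Y.le_of_opNorm_le hY2 x
    rw [inner_self_eq_norm_sq]
    nlinarith [norm_nonneg x]
  · change (q • (1 - Y)) * (q • (1 - Y)) = P
    rw [smul_mul_smul_comm, hY3, sub_sub_cancel, smul_smul, hq, one_smul]

lemma aux_douglas {𝕜 H : Type*} [RCLike 𝕜]
    [NormedAddCommGroup H] [InnerProductSpace 𝕜 H] [CompleteSpace H]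
    (R : H →L[𝕜] H) (hR : IsSelfAdjoint R) (w : H) (K : ℝ)
    (h : ∀ x, ‖⟪w, x⟫_𝕜‖ ≤ K * ‖R x‖) : w ∈ Set.range R := by
  obtain ⟨s, hs⟩ := (R : H →ₗ[𝕜] H).rangeRestrict.exists_rightInverse_of_surjective
    (LinearMap.range_rangeRestrict _)
  have hs' : ∀ y : LinearMap.range (R : H →ₗ[𝕜] H), R (s y) = y := fun y =>
    congrArg Subtype.val (LinearMap.congr_fun hs y)
  let f : StrongDual 𝕜 (LinearMap.range (R : H →ₗ[𝕜] H)) :=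
    LinearMap.mkContinuous ((innerSL 𝕜 w : H →ₗ[𝕜] 𝕜) ∘ₗ s) K (fun y => by
      have := h (s y)
      rw [hs' y] at this
      simpa using this)
  obtain ⟨g, hg, -⟩ := exists_extension_norm_eq _ f
  refine ⟨(InnerProductSpace.toDual 𝕜 H).symm g, ?_⟩
  refine ext_inner_right 𝕜 fun x => ?_
  have h1 := hR.isSymmetric ((InnerProductSpace.toDual 𝕜 H).symm g) x
  simp only [ContinuousLinearMap.coe_coe] at h1
  rw [h1, InnerProductSpace.toDual_symm_apply]
  have h2 := hg ⟨R x, ⟨x, rfl⟩⟩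
  simp only at h2
  rw [h2]
  change ⟪w, s ⟨R x, ⟨x, rfl⟩⟩⟫_𝕜 = _
  rw [← sub_eq_zero, ← inner_sub_right, ← norm_le_zero_iff]
  refine (h _).trans ?_
  rw [map_sub, hs']
  simp

theorem quadratic_bddBelow_iff
    {𝕜 H : Type*} [RCLike 𝕜]
    [NormedAddCommGroup H] [InnerProductSpace 𝕜 H] [CompleteSpace H]
    (P : H →L[𝕜] H) (hP : IsSelfAdjoint P) (w : H) :
    (∃ cb : ℝ, ∀ x : H, cb ≤ re ⟪P x, x⟫_𝕜 + 2 * re ⟪w, x⟫_𝕜)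
    ↔
    ((∀ x : H, 0 ≤ re ⟪P x, x⟫_𝕜) ∧ MemRanSqrt P w) := by
  have hRP : ∀ R : H →L[𝕜] H, IsSelfAdjoint R → R.comp R = P →
      ∀ x, re ⟪P x, x⟫_𝕜 = ‖R x‖ ^ 2 := by
    intro R hR hRR x
    have h1 := hR.isSymmetric (R x) x
    simp only [ContinuousLinearMap.coe_coe] at h1
    rw [← hRR, ContinuousLinearMap.comp_apply, h1, inner_self_eq_norm_sq]
  constructor
  · rintro ⟨cb, hcb⟩
    have hq : ∀ (x : H) (t : ℝ),
        cb ≤ t ^ 2 * re ⟪P x, x⟫_𝕜 + 2 * (t * re ⟪w, x⟫_𝕜) := by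
      intro x t
      have := hcb ((t : 𝕜) • x)
      simp only [map_smul, inner_smul_left, inner_smul_right, RCLike.conj_ofReal,
        RCLike.re_ofReal_mul] at this
      linarith
    have hpos : ∀ x : H, 0 ≤ re ⟪P x, x⟫_𝕜 := by
      intro x
      by_contra! hneg
      set a := re ⟪P x, x⟫_𝕜
      obtain ⟨n, hn⟩ := exists_nat_gt (cb / a + 1)
      have h1 := hq x (n + 1)
      have h2 := hq x (-(n + 1))
      have h3 : cb ≤ (n + 1 : ℝ) ^ 2 * a := by nlinarith
      have h4 : cb / a < n := by linarith
      rw [div_lt_iff_of_neg hneg] at h4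
      have h5 : (0 : ℝ) ≤ n := n.cast_nonneg
      nlinarith [mul_nonneg h5 h5]
    refine ⟨hpos, ?_⟩
    obtain ⟨R, hR1, hR2, hR3⟩ := aux_sqrt P hP hpos
    refine ⟨R, hR1, hR2, hR3, ?_⟩
    have hcb0 : cb ≤ 0 := by simpa using hcb 0
    have hb : ∀ x, (re ⟪w, x⟫_𝕜) ^ 2 ≤ -cb * ‖R x‖ ^ 2 := by
      intro x
      have := discrim_le_zero (a := re ⟪P x, x⟫_𝕜) (b := 2 * re ⟪w, x⟫_𝕜) (c := -cb)
        (fun t => by have := hq x t; nlinarith)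
      rw [discrim, hRP R hR1 hR3] at this
      nlinarith
    refine aux_douglas R hR1 w (√(-cb)) fun x => ?_
    refine le_of_sq_le_sq ?_ (by positivity)
    rw [mul_pow, Real.sq_sqrt (by linarith)]
    rcases eq_or_ne ⟪w, x⟫_𝕜 0 with h0 | h0
    · rw [h0, norm_zero]
      have := mul_nonneg (neg_nonneg.2 hcb0) (sq_nonneg ‖R x‖)
      simpa using this
    · have h1 := hb ((starRingEnd 𝕜 ⟪w, x⟫_𝕜) • x)
      rw [inner_smul_right, RCLike.conj_mul, map_smul, norm_smul, RCLike.norm_conj,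
        ← RCLike.ofReal_pow, RCLike.ofReal_re] at h1
      have h2 : 0 < ‖⟪w, x⟫_𝕜‖ ^ 2 := by positivity
      refine le_of_mul_le_mul_left ?_ h2
      linarith
  · rintro ⟨-, R, hR1, -, hR3, v, rfl⟩
    refine ⟨-‖v‖ ^ 2, fun x => ?_⟩
    have h1 := hR1.isSymmetric v x
    simp only [ContinuousLinearMap.coe_coe] at h1
    rw [hRP R hR1 hR3, h1]
    have h2 := norm_add_sq (𝕜 := 𝕜) v (R x)
    nlinarith [sq_nonneg ‖v + R x‖]
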